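/- Let q be a real number with q > 0 and q ≠ 1, and let d_1 and d_2 be integers with d_1 ≥ 1 and d_2 ≥ 1. Then ∑_{k_0=1}^{min(d_1, d_2)} ([2d_1 + d_2]_q/[k_0]_q) · [d_1 + d_2 + k_0 − 1 choose k_0 − 1]_q · [d_1 − 1 choose k_0 − 1]_q · [d_2 choose k_0]_q = ([2d_1 + d_2]_q/[d_2]_q) · ([d_1 + d_2 − 1 choose d_1]_q)^2. (This is the q-binomial identity, evaluated via the q-Pfaff–Saalschütz summation, to which the second main theorem reduces after substituting the closed form of f.) -/

import Mathlib

attribute [local instance] Classical.propDecidable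

/-- The symmetric ("physics convention") `q`-integer `[a]_q = q^{a/2} - q^{-a/2}`. -/
noncomputable def qint (q : ℝ) (a : ℤ) : ℝ :=
  q ^ ((a : ℝ) / 2) - q ^ (-((a : ℝ) / 2))

/-- The `q`-binomial coefficient
`[n choose k]_q = ([n]_q [n-1]_q ⋯ [n-k+1]_q)/([k]_q [k-1]_q ⋯ [1]_q)` for `0 ≤ k ≤ n`,
and `0` otherwise. -/
noncomputable def qbinom (q : ℝ) (n k : ℤ) : ℝ :=
  if 0 ≤ k ∧ k ≤ n then
    (∏ i ∈ Finset.range k.toNat, qint q (n - (i : ℤ))) /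
      ∏ i ∈ Finset.range k.toNat, qint q (k - (i : ℤ))
  else 0

theorem qint_eq_zpow (q : ℝ) (hq0 : 0 < q) (n : ℤ) :
    qint q n = (q ^ (1 / 2 : ℝ)) ^ n - ((q ^ (1 / 2 : ℝ)) ^ n)⁻¹ := by
  have h : q ^ ((n : ℝ) / 2) = (q ^ (1 / 2 : ℝ)) ^ n := by
    rw [← Real.rpow_intCast, ← Real.rpow_mul hq0.le]
    congr 1
    ring
  rw [qint, Real.rpow_neg hq0.le, h]

theorem qint_zero (q : ℝ) : qint q 0 = 0 := by
  simp [qint]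

theorem qint_ne_zero {q : ℝ} (hq0 : 0 < q) (hq1 : q ≠ 1) {n : ℤ} (hn : 0 < n) :
    qint q n ≠ 0 := by
  intro h
  have hn' : (0 : ℝ) < n := by exact_mod_cast hn
  have h2 := (Real.rpow_right_inj hq0 hq1).1 (sub_eq_zero.1 h)
  linarith

/-- The polynomial identity behind the telescoping certificate. -/
theorem qint_certificate {q : ℝ} (hq0 : 0 < q) (a b k : ℤ) :
    qint q (a + b + k) * qint q (b + 1) ^ 2 * qint q b
        - qint q (a + b) ^ 2 * qint q (a + b + 1) * qint q (b + 1 - k)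
      = -qint q (a + 2 * b + 1) *
        (qint q (a + b + k) * qint q (a - k) * qint q (b + 1 - k)
          - qint q k ^ 2 * qint q (k - 1)) := by
  have hx : q ^ (1 / 2 : ℝ) ≠ 0 := (Real.rpow_pos_of_pos hq0 _).ne'
  simp only [qint_eq_zpow q hq0]
  generalize q ^ (1 / 2 : ℝ) = x at hx
  simp only [two_mul, zpow_add₀ hx, zpow_sub₀ hx, zpow_one]
  have hA := zpow_ne_zero a hx
  have hB := zpow_ne_zero b hx
  have hK := zpow_ne_zero k hx
  generalize x ^ a = A at *
  generalize x ^ b = B at *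
  generalize x ^ k = K at *
  field_simp
  ring

/-- The product `∏_{i<k} [n-i]_q / [i+1]_q`, extending `qbinom` to all integers `n`. -/
noncomputable def qchoose (q : ℝ) (n : ℤ) (k : ℕ) : ℝ :=
  ∏ i ∈ Finset.range k, qint q (n - i) / qint q (i + 1)

theorem qchoose_succ (q : ℝ) (n : ℤ) (k : ℕ) :
    qchoose q n (k + 1) = qchoose q n k * (qint q (n - k) / qint q (k + 1)) :=
  Finset.prod_range_succ _ _

theorem qchoose_zero_right (q : ℝ) (n : ℤ) : qchoose q n 0 = 1 := rfl

theorem qchoose_eq_zero {q : ℝ} {n : ℤ} {k : ℕ} (hn : 0 ≤ n) (hk : n < k) :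
    qchoose q n k = 0 := by
  refine Finset.prod_eq_zero (i := n.toNat) (by simp; omega) ?_
  rw [Int.toNat_of_nonneg hn, sub_self, qint_zero, zero_div]

theorem qchoose_self {q : ℝ} (hq0 : 0 < q) (hq1 : q ≠ 1) (n : ℕ) :
    qchoose q n n = 1 := by
  rw [qchoose, Finset.prod_div_distrib, ← Finset.prod_range_reflect, div_eq_one_iff_eq]
  · refine Finset.prod_congr rfl fun i hi => ?_
    rw [Finset.mem_range] at hi
    congr 1
    omega
  · exact Finset.prod_ne_zero_iff.2 fun i _ => qint_ne_zero hq0 hq1 (by omega)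

theorem qbinom_eq_qchoose {q : ℝ} {n : ℤ} (k : ℕ) (hn : 0 ≤ n) :
    qbinom q n k = qchoose q n k := by
  by_cases hk : (k : ℤ) ≤ n
  · rw [qbinom, if_pos ⟨by omega, hk⟩, qchoose, Finset.prod_div_distrib, Int.toNat_natCast]
    congr 1
    rw [← Finset.prod_range_reflect]
    refine Finset.prod_congr rfl fun i hi => ?_
    rw [Finset.mem_range] at hi
    congr 1
    omega
  · rw [qbinom, if_neg (fun h => hk h.2), qchoose_eq_zero hn (by omega)]

theorem qchoose_succ_left_mul {q : ℝ} (n : ℤ) (k : ℕ) :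
    qchoose q (n + 1) k * qint q (n + 1 - k) = qchoose q n k * qint q (n + 1) := by
  induction k with
  | zero => simp [qchoose_zero_right]
  | succ k ih =>
    rw [qchoose_succ, qchoose_succ]
    have e : n + 1 - ((k + 1 : ℕ) : ℤ) = n - k := by omega
    rw [e]
    linear_combination (qint q (n - k) / qint q (k + 1)) * ih

theorem qchoose_succ_succ_mul {q : ℝ} (hq0 : 0 < q) (hq1 : q ≠ 1) (n : ℤ) (k : ℕ) :
    qchoose q (n + 1) (k + 1) * qint q (k + 1) = qchoose q n k * qint q (n + 1) := by
  have h : qint q ((k : ℤ) + 1) ≠ 0 := qint_ne_zero hq0 hq1 (by omega)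
  rw [qchoose_succ, ← qchoose_succ_left_mul]
  field_simp

/-- The summand of the identity (without the factor `[2a+b]_q`), indexed by `j = k₀ - 1`. -/
noncomputable def saalTerm (q : ℝ) (a b : ℤ) (j : ℕ) : ℝ :=
  1 / qint q (j + 1) * qchoose q (a + b + j) j * qchoose q (a - 1) j * qchoose q b (j + 1)

/-- The common factor of `saalTerm q a b` and `saalTerm q a (b + 1)`. -/
noncomputable def saalAux (q : ℝ) (a b : ℤ) (j : ℕ) : ℝ :=
  1 / qint q (j + 1) * qchoose q (a + b + j) j * qchoose q (a - 1) j *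
    qchoose q (b + 1) (j + 1) / qint q (b + 1)

theorem saalTerm_eq {q : ℝ} {a b : ℤ} (hb : qint q (b + 1) ≠ 0) (j : ℕ) :
    saalTerm q a b j = qint q (b - j) * saalAux q a b j := by
  have h := qchoose_succ_left_mul (q := q) b (j + 1)
  have e : b + 1 - ((j + 1 : ℕ) : ℤ) = b - j := by omega
  rw [e] at h
  rw [saalTerm, saalAux, ← mul_div_assoc, eq_div_iff hb]
  linear_combination -(1 / qint q (j + 1) * qchoose q (a + b + j) j * qchoose q (a - 1) j) * h

theorem saalTerm_succ_mul {q : ℝ} {a b : ℤ} (hb : qint q (b + 1) ≠ 0) (j : ℕ) :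
    saalTerm q a (b + 1) j * qint q (a + b + 1) =
      qint q (a + b + (j + 1)) * qint q (b + 1) * saalAux q a b j := by
  have h := qchoose_succ_left_mul (q := q) (a + b + j) j
  have e : a + b + j + 1 - (j : ℤ) = a + b + 1 := by omega
  rw [e] at h
  have e2 : a + (b + 1) + (j : ℤ) = a + b + j + 1 := by omega
  have e3 : a + b + ((j : ℤ) + 1) = a + b + j + 1 := by omega
  rw [saalTerm, saalAux, e2, e3]
  field_simp
  linear_combination 1 / qint q (j + 1) * qchoose q (a - 1) j * qchoose q (b + 1) (j + 1) * h

theorem saalAux_succ_mul {q : ℝ} (hq0 : 0 < q) (hq1 : q ≠ 1) {a b : ℤ} (j : ℕ) :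
    qint q (j + 2) ^ 2 * qint q (j + 1) * saalAux q a b (j + 1) =
      qint q (a + b + (j + 1)) * qint q (a - (j + 1)) * qint q (b - j) * saalAux q a b j := by
  have h1 : qint q ((j : ℤ) + 1) ≠ 0 := qint_ne_zero hq0 hq1 (by omega)
  have h2 : qint q ((j : ℤ) + 2) ≠ 0 := qint_ne_zero hq0 hq1 (by omega)
  have h := qchoose_succ_succ_mul hq0 hq1 (a + b + j) j
  have hs := qchoose_succ q (b + 1) (j + 1)
  have e1 : ((j + 1 : ℕ) : ℤ) + 1 = j + 2 := by omega
  have e2 : a + b + ((j + 1 : ℕ) : ℤ) = a + b + j + 1 := by omega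
  have e3 : a + b + ((j : ℤ) + 1) = a + b + j + 1 := by omega
  have e4 : b + 1 - ((j + 1 : ℕ) : ℤ) = b - j := by omega
  have e5 : a - 1 - (j : ℤ) = a - (j + 1) := by omega
  rw [e1, e4] at hs
  rw [saalAux, saalAux, hs, qchoose_succ q (a - 1), e1, e2, e3, e5]
  rw [← eq_div_iff h1] at h
  rw [h]
  field_simp

theorem sum_saalAux_telescope {q : ℝ} (hq0 : 0 < q) (hq1 : q ≠ 1) {a b : ℤ} (n : ℕ) :
    ∑ j ∈ Finset.range n,
        (qint q (a + b + (j + 1)) * qint q (a - (j + 1)) * qint q (b - j)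
          - qint q (j + 1) ^ 2 * qint q j) * saalAux q a b j
      = qint q (n + 1) ^ 2 * qint q n * saalAux q a b n := by
  induction n with
  | zero => simp [qint_zero]
  | succ n ih =>
    have h := saalAux_succ_mul hq0 hq1 (a := a) (b := b) n
    have e : ((n + 1 : ℕ) : ℤ) + 1 = n + 2 := by omega
    have e' : ((n + 1 : ℕ) : ℤ) = n + 1 := by omega
    rw [Finset.sum_range_succ, ih, e, e', h]
    ring

theorem sum_saalTerm_succ {q : ℝ} (hq0 : 0 < q) (hq1 : q ≠ 1) {a : ℤ} (ha : 1 ≤ a) (b : ℕ) :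
    (∑ j ∈ Finset.range (b + 1), saalTerm q a (b + 1) j) * (qint q b * qint q (b + 1)) =
      qint q (a + b) ^ 2 * ∑ j ∈ Finset.range b, saalTerm q a b j := by
  have hb : qint q ((b : ℤ) + 1) ≠ 0 := qint_ne_zero hq0 hq1 (by omega)
  have hab : qint q (a + b + 1) ≠ 0 := qint_ne_zero hq0 hq1 (by omega)
  have hlast : saalTerm q a b b = 0 := by
    rw [saalTerm_eq hb, sub_self, qint_zero, zero_mul]
  have hext : ∑ j ∈ Finset.range b, saalTerm q a b j =
      ∑ j ∈ Finset.range (b + 1), saalTerm q a b j := by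
    rw [Finset.sum_range_succ, hlast, add_zero]
  have hzero : saalAux q a b (b + 1) = 0 := by
    rw [saalAux, qchoose_eq_zero (n := b + 1) (by omega) (by push_cast; omega), mul_zero, zero_div]
  have htel := sum_saalAux_telescope hq0 hq1 (a := a) (b := b) (b + 1)
  rw [hzero, mul_zero] at htel
  rw [hext, ← sub_eq_zero]
  refine (mul_eq_zero.1 ?_).resolve_right hab
  have key : ((∑ j ∈ Finset.range (b + 1), saalTerm q a (b + 1) j) *
        (qint q b * qint q (b + 1)) -
      qint q (a + b) ^ 2 * ∑ j ∈ Finset.range (b + 1), saalTerm q a b j) * qint q (a + b + 1) =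
      -qint q (a + 2 * b + 1) * ∑ j ∈ Finset.range (b + 1),
        (qint q (a + b + (j + 1)) * qint q (a - (j + 1)) * qint q (b - j)
          - qint q (j + 1) ^ 2 * qint q j) * saalAux q a b j := by
    rw [Finset.sum_mul, Finset.mul_sum, ← Finset.sum_sub_distrib, Finset.sum_mul,
      Finset.mul_sum]
    refine Finset.sum_congr rfl fun j _ => ?_
    have hc := qint_certificate hq0 a b (j + 1)
    have e1 : (b : ℤ) + 1 - (j + 1) = b - j := by omega
    have e2 : (j : ℤ) + 1 - 1 = j := by omega
    rw [e1, e2] at hc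
    have ht := saalTerm_succ_mul (a := a) hb j
    rw [saalTerm_eq hb]
    linear_combination qint q b * qint q (b + 1) * ht + saalAux q a b j * hc
  rw [key, htel, mul_zero]

theorem sum_saalTerm {q : ℝ} (hq0 : 0 < q) (hq1 : q ≠ 1) {a : ℕ} (ha : 1 ≤ a) (b : ℕ) :
    ∑ j ∈ Finset.range (b + 1), saalTerm q a (b + 1) j =
      qchoose q (a + b) a ^ 2 / qint q (b + 1) := by
  induction b with
  | zero =>
    have h1 : qint q 1 ≠ 0 := qint_ne_zero hq0 hq1 one_pos
    simp [saalTerm, qchoose_zero_right, qchoose_succ, qchoose_self hq0 hq1, h1]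
  | succ b ih =>
    have h1 : qint q ((b : ℤ) + 1) ≠ 0 := qint_ne_zero hq0 hq1 (by omega)
    have h2 : qint q ((b : ℤ) + 1 + 1) ≠ 0 := qint_ne_zero hq0 hq1 (by omega)
    have h := sum_saalTerm_succ hq0 hq1 (a := a) (by omega) (b + 1)
    have hc := qchoose_succ_left_mul (q := q) (a + b) a
    have e : (a : ℤ) + b + 1 - a = b + 1 := by omega
    push_cast at h ⊢
    rw [ih] at h
    rw [e] at hc
    rw [← add_assoc] at h ⊢
    rw [← eq_div_iff h1] at hc
    rw [hc, eq_div_of_mul_eq (mul_ne_zero h1 h2) h]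
    field_simp

/-- The `q`-binomial identity (evaluated via the `q`-Pfaff–Saalschütz summation) to
which Theorem 3 of the paper reduces after substituting the closed form of `f`:
for integers `d1 ≥ 1` and `d2 ≥ 1`,
`∑_{k0=1}^{min(d1,d2)} ([2d1+d2]_q/[k0]_q) [d1+d2+k0-1 choose k0-1]_q
   [d1-1 choose k0-1]_q [d2 choose k0]_q
 = ([2d1+d2]_q/[d2]_q) ([d1+d2-1 choose d1]_q)²`. -/
theorem final_sum_F0 (q : ℝ) (hq0 : 0 < q) (hq1 : q ≠ 1)
    (d1 d2 : ℤ) (hd1 : 1 ≤ d1) (hd2 : 1 ≤ d2) :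
    (∑ k0 ∈ Finset.Icc (1 : ℤ) (min d1 d2),
      qint q (2 * d1 + d2) / qint q k0 * qbinom q (d1 + d2 + k0 - 1) (k0 - 1) *
        qbinom q (d1 - 1) (k0 - 1) * qbinom q d2 k0)
    = qint q (2 * d1 + d2) / qint q d2 * (qbinom q (d1 + d2 - 1) d1) ^ 2 := by
  obtain ⟨a, rfl⟩ := Int.eq_ofNat_of_zero_le (by omega : 0 ≤ d1)
  obtain ⟨b, rfl⟩ : ∃ b : ℕ, d2 = b + 1 := ⟨(d2 - 1).toNat, by omega⟩
  have hsub : Finset.Icc (1 : ℤ) (min a (b + 1)) ⊆ Finset.Icc (1 : ℤ) (b + 1) :=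
    Finset.Icc_subset_Icc le_rfl (min_le_right _ _)
  rw [Finset.sum_subset hsub]
  · have hsum : ∑ j ∈ Finset.range (b + 1),
        qint q (2 * a + (b + 1)) * saalTerm q a (b + 1) j =
        ∑ k0 ∈ Finset.Icc (1 : ℤ) (b + 1),
          qint q (2 * a + (b + 1)) / qint q k0 * qbinom q (a + (b + 1) + k0 - 1) (k0 - 1) *
            qbinom q (a - 1) (k0 - 1) * qbinom q (b + 1) k0 := by
      refine Finset.sum_nbij' (fun j => (j : ℤ) + 1) (fun k => (k - 1).toNat)
        ?_ ?_ ?_ ?_ ?_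
      · intro j hj
        simp only [Finset.mem_range, Finset.mem_Icc] at *
        omega
      · intro k hk
        simp only [Finset.mem_range, Finset.mem_Icc] at *
        omega
      · intro j _
        simp
      · intro k hk
        simp only [Finset.mem_Icc] at hk
        omega
      · intro j _
        have e1 : (a : ℤ) + (b + 1) + (j + 1) - 1 = a + (b + 1) + j := by omega
        have e2 : (j : ℤ) + 1 - 1 = j := by omega
        have h := qbinom_eq_qchoose (q := q) (n := (b : ℤ) + 1) (j + 1) (by omega)
        push_cast at h
        rw [e1, e2, h, qbinom_eq_qchoose _ (by omega), qbinom_eq_qchoose _ (by omega), saalTerm]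
        ring
    have e : (a : ℤ) + (b + 1) - 1 = a + b := by omega
    rw [← hsum, ← Finset.mul_sum, sum_saalTerm hq0 hq1 (by omega), e,
      qbinom_eq_qchoose _ (by omega)]
    ring
  · intro k hk hk'
    simp only [Finset.mem_Icc] at hk hk'
    have : qbinom q ((a : ℤ) - 1) (k - 1) = 0 := if_neg (by omega)
    rw [this, mul_zero, zero_mul]
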